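/- arXiv:2406.07724 — 3 statements merged into one kernel-verified Lean document; each statement's English description precedes it below -/
import Mathlib

section
/- For every natural number k and every ρ ∈ (0,1) there exists a constant C > 0 (depending only on k and ρ) such that: for every h > 0, every ρ-shape-regular compact convex set K ⊆ ℝ² with diameter at most h that contains a closed ball of radius ρ·h, and every polynomial p in two real variables of total degree at most k, one has ∫_{∂K} p(x)² dμH¹(x) ≤ C·( h^{-1}·∫_K p(x)² dx + h·∫_K ‖∇p(x)‖² dx ), where ∂K is the topological boundary (frontier) of K and μH¹ is the 1-dimensional Hausdorff measure. -/
/-!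
The gradient term on the right-hand side is nonnegative and can be dropped: polynomials of bounded
degree satisfy `∫_{∂K} p² ≤ C h⁻¹ ∫_K p²`. Bound the left-hand side by `μH¹(∂K) · sup_K p²`.

* Perimeter (`hausdorffMeasure_frontier_le`). If `K` lies between concentric discs of radii `ρ h`
  and `h`, the gauge of `K` about their centre is `(ρ h)⁻¹`-Lipschitz and at least `1 / h` on the
  unit circle, so the radial map from the circle onto `∂K` is Lipschitz with constant
  `h (1 + 1 / ρ)`, and the perimeter is `O(h)`.
* Sup bound (`exists_sq_eval_le_integral_scaled`). On the finite-dimensional space of polynomials of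
  degree at most `k`, the sup norm over the unit disc is controlled by the `L²` norm over the disc
  of radius `ρ`. The substitution `x ↦ c + h x` turns this into
  `sup_{B(c, h)} p² ≤ M h⁻² ∫_{B(c, ρ h)} p²`; the diameter bound gives `K ⊆ B(c, h)`, and
  `B(c, ρ h) ⊆ K` by hypothesis.
-/

open MeasureTheory

/-- The counterclockwise unit-speed parametrisation of the unit circle. -/
noncomputable def circleParam (t : ℝ) : EuclideanSpace ℝ (Fin 2) := !₂[Real.cos t, Real.sin t]

lemma norm_circleParam (t : ℝ) : ‖circleParam t‖ = 1 := by
  simp [circleParam, EuclideanSpace.norm_eq, Fin.sum_univ_two]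

lemma norm_circleParam_sub_le (s t : ℝ) : ‖circleParam s - circleParam t‖ ≤ 2 * |s - t| := by
  have h1 := Real.abs_sin_sub_sin_le s t
  have h2 : |Real.cos s - Real.cos t| ≤ |s - t| := Real.abs_cos_sub_cos_le s t
  rw [EuclideanSpace.norm_eq, Fin.sum_univ_two]
  refine Real.sqrt_le_iff.2 ⟨by positivity, ?_⟩
  simp only [circleParam, PiLp.sub_apply, Real.norm_eq_abs, Matrix.cons_val_zero,
    Matrix.cons_val_one]
  have h3 := abs_nonneg (Real.sin s - Real.sin t)
  have h4 := abs_nonneg (Real.cos s - Real.cos t)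
  nlinarith

/-- Polar coordinates. The angle at `x = 0` is irrelevant, since the radius vanishes. -/
lemma exists_circleParam (x : EuclideanSpace ℝ (Fin 2)) :
    ∃ t ∈ Set.Icc (-Real.pi) Real.pi, x = ‖x‖ • circleParam t := by
  have hn : ‖(⟨x 0, x 1⟩ : ℂ)‖ = ‖x‖ := by
    rw [EuclideanSpace.norm_eq, Fin.sum_univ_two, Complex.norm_def]
    simp [Complex.normSq_apply, sq]
  refine ⟨Complex.arg ⟨x 0, x 1⟩, ⟨(Complex.neg_pi_lt_arg _).le, Complex.arg_le_pi _⟩, ?_⟩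
  have hc := Complex.norm_mul_cos_arg ⟨x 0, x 1⟩
  have hs := Complex.norm_mul_sin_arg ⟨x 0, x 1⟩
  rw [hn] at hc hs
  ext i
  fin_cases i
  · simpa [circleParam] using hc.symm
  · simpa [circleParam] using hs.symm

/-- A planar convex body between the concentric balls of radii `r` and `R` has perimeter at most
`4π (R + R² / r)`: the radial parametrisation `t ↦ c + u(t) / gauge (K - c) (u(t))` of its boundary
by the unit circle is Lipschitz. -/
lemma hausdorffMeasure_frontier_le {K : Set (EuclideanSpace ℝ (Fin 2))} (hK : Convex ℝ K)
    {c : EuclideanSpace ℝ (Fin 2)} {r R : ℝ} (hr : 0 < r) (hR : 0 < R)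
    (h1 : Metric.closedBall c r ⊆ K) (h2 : K ⊆ Metric.closedBall c R) :
    μH[1] (frontier K) ≤ ENNReal.ofReal (2 * (R + R ^ 2 / r) * (2 * Real.pi)) := by
  set K' : Set (EuclideanSpace ℝ (Fin 2)) := (fun x => c + x) ⁻¹' K with hK'
  have hconv : Convex ℝ K' := hK.translate_preimage_right c
  have hin : Metric.closedBall 0 r ⊆ K' := by
    intro x hx
    apply h1
    simpa using hx
  have hout : K' ⊆ Metric.closedBall 0 R := by
    intro x hx
    simpa using h2 hx
  have hnhds : K' ∈ nhds (0 : EuclideanSpace ℝ (Fin 2)) :=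
    Filter.mem_of_superset (Metric.closedBall_mem_nhds _ hr) hin
  have habs : Absorbent ℝ K' := absorbent_nhds_zero hnhds
  have hlow : ∀ t, 1 / R ≤ gauge K' (circleParam t) := fun t => by
    simpa [norm_circleParam] using le_gauge_of_subset_closedBall (x := circleParam t) habs hR.le hout
  have hpos : ∀ t, 0 < gauge K' (circleParam t) := fun t => lt_of_lt_of_le (by positivity) (hlow t)
  have hinv : ∀ t, (gauge K' (circleParam t))⁻¹ ≤ R := fun t => by
    have := inv_anti₀ (by positivity) (hlow t)
    simpa using this
  have hlip : ∀ x y, |gauge K' x - gauge K' y| ≤ r⁻¹ * ‖x - y‖ := fun x y => by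
    have := (hconv.lipschitzWith_gauge (r := r.toNNReal) (Real.toNNReal_pos.2 hr)
      (by rw [Real.coe_toNNReal _ hr.le]; exact Metric.ball_subset_closedBall.trans hin)).dist_le_mul x y
    simpa [Real.dist_eq, dist_eq_norm, Real.coe_toNNReal _ hr.le] using this
  let f : ℝ → EuclideanSpace ℝ (Fin 2) := fun t =>
    c + (gauge K' (circleParam t))⁻¹ • circleParam t
  have hL : 0 ≤ 2 * (R + R ^ 2 / r) := by positivity
  have hf : LipschitzWith (2 * (R + R ^ 2 / r)).toNNReal f := by
    refine LipschitzWith.of_dist_le_mul fun s t => ?_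
    have hs := hpos s
    have ht := hpos t
    have hd : ‖circleParam s - circleParam t‖ ≤ 2 * |s - t| := norm_circleParam_sub_le s t
    have e : f s - f t = (gauge K' (circleParam s))⁻¹ • (circleParam s - circleParam t) +
        ((gauge K' (circleParam s))⁻¹ - (gauge K' (circleParam t))⁻¹) • circleParam t := by
      simp only [f]; module
    have e2 : |(gauge K' (circleParam s))⁻¹ - (gauge K' (circleParam t))⁻¹|
        ≤ R * R * (r⁻¹ * ‖circleParam s - circleParam t‖) := by
      have e3 : (gauge K' (circleParam s))⁻¹ - (gauge K' (circleParam t))⁻¹ =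
        ((gauge K' (circleParam s))⁻¹ * (gauge K' (circleParam t))⁻¹) *
          (gauge K' (circleParam t) - gauge K' (circleParam s)) := by
        field_simp
      rw [e3, abs_mul, abs_of_pos (by positivity), abs_sub_comm]
      gcongr
      · exact hinv s
      · exact hinv t
      · exact hlip _ _
    rw [dist_eq_norm, e, Real.dist_eq]
    calc _ ≤ (gauge K' (circleParam s))⁻¹ * ‖circleParam s - circleParam t‖ +
          |(gauge K' (circleParam s))⁻¹ - (gauge K' (circleParam t))⁻¹| * 1 := by
          refine (norm_add_le _ _).trans ?_
          rw [norm_smul, norm_smul, norm_circleParam, Real.norm_eq_abs, Real.norm_eq_abs,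
            abs_of_pos (by positivity)]
      _ ≤ R * ‖circleParam s - circleParam t‖ +
          R * R * (r⁻¹ * ‖circleParam s - circleParam t‖) * 1 := by
          gcongr
          exact hinv s
      _ = (R + R ^ 2 / r) * ‖circleParam s - circleParam t‖ := by field_simp
      _ ≤ (R + R ^ 2 / r) * (2 * |s - t|) := by gcongr
      _ = _ := by rw [Real.coe_toNNReal _ hL]; ring
  have hcov : frontier K ⊆ f '' Set.Icc (-Real.pi) Real.pi := by
    intro x hx
    have hx' : x - c ∈ frontier K' := by
      have : frontier K' = (fun x => c + x) ⁻¹' frontier K :=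
        ((Homeomorph.addLeft c).preimage_frontier K).symm
      rw [this]
      simpa using hx
    have hg := (gauge_eq_one_iff_mem_frontier hconv hnhds).2 hx'
    obtain ⟨t, ht, hxt⟩ := exists_circleParam (x - c)
    refine ⟨t, ht, ?_⟩
    rw [hxt, gauge_smul_of_nonneg (norm_nonneg _), smul_eq_mul] at hg
    have : (gauge K' (circleParam t))⁻¹ = ‖x - c‖ := inv_eq_of_mul_eq_one_left hg
    simp only [f]
    rw [this, ← hxt]
    abel
  calc μH[1] (frontier K) ≤ μH[1] (f '' Set.Icc (-Real.pi) Real.pi) := measure_mono hcov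
    _ ≤ _ := (hf.lipschitzOnWith (s := Set.Icc (-Real.pi) Real.pi)).hausdorffMeasure_image_le
        zero_le_one
    _ = _ := by
      rw [hausdorffMeasure_real, Real.volume_Icc, ENNReal.rpow_one, ENNReal.ofReal_mul hL]
      congr 2
      ring

lemma continuous_evalEuclidean (p : MvPolynomial (Fin 2) ℝ) :
    Continuous fun x : EuclideanSpace ℝ (Fin 2) => MvPolynomial.eval (fun i => x i) p := by
  have := MvPolynomial.continuous_eval p
  exact this.comp (by fun_prop)

/-- A polynomial whose square has zero integral over a disc is zero: by continuity it vanishes on the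
open disc, hence on a product of two infinite sets. -/
lemma eq_zero_of_integral_sq_eq_zero {p : MvPolynomial (Fin 2) ℝ} {ρ : ℝ} (hρ : 0 < ρ)
    (h : ∫ x in Metric.closedBall (0 : EuclideanSpace ℝ (Fin 2)) ρ,
      (MvPolynomial.eval (fun i => x i) p) ^ 2 = 0) : p = 0 := by
  have hc := (continuous_evalEuclidean p)
  rw [setIntegral_eq_zero_iff_of_nonneg_ae (Filter.Eventually.of_forall fun x => sq_nonneg _)
    ((hc.pow 2).continuousOn.integrableOn_compact (isCompact_closedBall _ _))] at h
  have h' := ae_restrict_of_ae_restrict_of_subset Metric.ball_subset_closedBall h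
  have heq := Measure.eqOn_open_of_ae_eq h' Metric.isOpen_ball (hc.pow 2).continuousOn
    continuousOn_const
  -- the square of half-side `ρ / 2` is contained in the disc of radius `ρ`
  refine MvPolynomial.funext_set (fun _ => Set.Ioo (-(ρ / 2)) (ρ / 2))
    (fun _ => Set.Ioo_infinite (by linarith)) fun x hx => ?_
  have hmem : WithLp.toLp 2 x ∈ Metric.ball (0 : EuclideanSpace ℝ (Fin 2)) ρ := by
    rw [mem_ball_zero_iff, EuclideanSpace.norm_eq, Fin.sum_univ_two, Real.sqrt_lt' hρ]
    obtain ⟨a, b⟩ := hx 0 (Set.mem_univ _)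
    obtain ⟨a', b'⟩ := hx 1 (Set.mem_univ _)
    simp only [Real.norm_eq_abs, sq_abs]
    nlinarith
  simpa using heq hmem

/-- Equivalence of the sup norm on the unit disc and the `L²` norm on the disc of radius `ρ` on the
finite-dimensional space of polynomials of degree at most `k`; it follows from compactness of the
unit sphere of the space of coefficient vectors. -/
lemma exists_sq_eval_le_integral (k : ℕ) {ρ : ℝ} (hρ : 0 < ρ) :
    ∃ M : ℝ, 0 < M ∧ ∀ p : MvPolynomial (Fin 2) ℝ, p.totalDegree ≤ k →
      ∀ y ∈ Metric.closedBall (0 : EuclideanSpace ℝ (Fin 2)) 1,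
        (MvPolynomial.eval (fun i => y i) p) ^ 2 ≤
          M * ∫ x in Metric.closedBall (0 : EuclideanSpace ℝ (Fin 2)) ρ,
            (MvPolynomial.eval (fun i => x i) p) ^ 2 := by
  classical
  set S : Finset (Fin 2 →₀ ℕ) := (Finsupp.finite_of_degree_le (σ := Fin 2) k).toFinset with hS
  -- `P a` is the polynomial with coefficient vector `a`, and `Φ a` its squared `L²` norm
  let P : (S → ℝ) → MvPolynomial (Fin 2) ℝ := fun a => ∑ m : S, MvPolynomial.monomial m.1 (a m)
  have hPcoeff : ∀ a (m : S), (P a).coeff m.1 = a m := fun a m => by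
    simp [P, MvPolynomial.coeff_sum, MvPolynomial.coeff_monomial]
  have hPsmul : ∀ (r : ℝ) a, P (r • a) = MvPolynomial.C r * P a := fun r a => by
    simp [P, Finset.mul_sum, MvPolynomial.C_mul_monomial]
  have hPeval : ∀ a (x : Fin 2 → ℝ), MvPolynomial.eval x (P a) =
      ∑ m : S, a m * ∏ i, x i ^ m.1 i := fun a x => by
    simp [P, MvPolynomial.eval_monomial, Finsupp.prod_fintype]
  have hPsurj : ∀ p : MvPolynomial (Fin 2) ℝ, p.totalDegree ≤ k →
      P (fun m => p.coeff m.1) = p := fun p hp => by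
    have hsub : p.support ⊆ S := fun m hm => by
      have := MvPolynomial.le_totalDegree hm
      simp only [hS, Set.Finite.mem_toFinset, Set.mem_ofPred_eq]
      exact le_trans (le_of_eq (Finsupp.degree_eq_sum m |>.trans (by simp [Finsupp.sum_fintype])))
        (this.trans hp)
    conv_rhs => rw [p.as_sum]
    rw [Finset.sum_subset hsub (fun m _ hm => by
      rw [MvPolynomial.notMem_support_iff.1 hm, MvPolynomial.monomial_zero])]
    exact Finset.sum_coe_sort S fun m => MvPolynomial.monomial m (p.coeff m)
  let Φ : (S → ℝ) → ℝ := fun a => ∫ x in Metric.closedBall (0 : EuclideanSpace ℝ (Fin 2)) ρ,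
    (MvPolynomial.eval (fun i => x i) (P a)) ^ 2
  have hΦc : Continuous Φ := by
    refine continuous_parametric_integral_of_continuous ?_ (isCompact_closedBall _ _)
    simp only [Function.uncurry_def, hPeval]
    fun_prop
  have hΦ0 : ∀ a, 0 ≤ Φ a := fun a => integral_nonneg fun x => sq_nonneg _
  have hΦsmul : ∀ (r : ℝ) a, Φ (r • a) = r ^ 2 * Φ a := fun r a => by
    simp only [Φ, hPsmul, map_mul, MvPolynomial.eval_C, mul_pow, integral_const_mul]
  have hΦpos : ∀ a, a ≠ 0 → 0 < Φ a := fun a ha => by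
    refine lt_of_le_of_ne (hΦ0 a) fun h0 => ha ?_
    have := eq_zero_of_integral_sq_eq_zero hρ h0.symm
    funext m
    rw [← hPcoeff a m, this]
    simp
  have hne : Nonempty S := ⟨⟨0, by simp [hS]⟩⟩
  obtain ⟨a₀, ha₀, hmin⟩ := (isCompact_sphere (0 : S → ℝ) 1).exists_isMinOn
    (NormedSpace.sphere_nonempty.2 zero_le_one) hΦc.continuousOn
  have hδ : 0 < Φ a₀ := hΦpos a₀ (ne_zero_of_mem_unit_sphere ⟨a₀, ha₀⟩)
  have hcoer : ∀ a, Φ a₀ * ‖a‖ ^ 2 ≤ Φ a := fun a => by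
    rcases eq_or_ne a 0 with rfl | ha
    · simpa using hΦ0 0
    · have hn : 0 < ‖a‖ := norm_pos_iff.2 ha
      have := hmin (show ‖a‖⁻¹ • a ∈ Metric.sphere (0 : S → ℝ) 1 by
        simp [norm_smul, hn.ne'])
      simp only [Set.mem_ofPred_eq, hΦsmul] at this
      calc _ ≤ (‖a‖⁻¹ ^ 2 * Φ a) * ‖a‖ ^ 2 := by gcongr
        _ = Φ a := by field_simp
  refine ⟨(Fintype.card S : ℝ) ^ 2 / Φ a₀, by positivity, fun p hp y hy => ?_⟩
  set a : S → ℝ := fun m => p.coeff m.1 with ha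
  have hp' := hPsurj p hp
  rw [← ha] at hp'
  have hy1 : ∀ i, |y i| ≤ 1 := fun i =>
    (PiLp.norm_apply_le y i).trans (by simpa using hy)
  have hle : |MvPolynomial.eval (fun i => y i) p| ≤ Fintype.card S * ‖a‖ := by
    rw [← hp', hPeval]
    calc _ ≤ ∑ m : S, |a m * ∏ i, y i ^ m.1 i| := Finset.abs_sum_le_sum_abs _ _
      _ ≤ ∑ m : S, ‖a‖ := by
        refine Finset.sum_le_sum fun m _ => ?_
        rw [abs_mul]
        refine (mul_le_of_le_one_right (abs_nonneg _) ?_).trans (norm_le_pi_norm a m)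
        rw [Finset.abs_prod]
        refine Finset.prod_le_one (fun _ _ => abs_nonneg _) fun i _ => ?_
        rw [abs_pow]
        exact pow_le_one₀ (abs_nonneg _) (hy1 i)
      _ = _ := by simp
  calc _ = |MvPolynomial.eval (fun i => y i) p| ^ 2 := (sq_abs _).symm
    _ ≤ (Fintype.card S * ‖a‖) ^ 2 := by gcongr
    _ = (Fintype.card S : ℝ) ^ 2 / Φ a₀ * (Φ a₀ * ‖a‖ ^ 2) := by field_simp
    _ ≤ (Fintype.card S : ℝ) ^ 2 / Φ a₀ * Φ a := by gcongr; exact hcoer a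
    _ = _ := by simp only [Φ, hp']

/-- Substituting polynomials of degree at most one does not raise the total degree. -/
lemma totalDegree_bind₁_le {p : MvPolynomial (Fin 2) ℝ} {k : ℕ} (hp : p.totalDegree ≤ k)
    (f : Fin 2 → MvPolynomial (Fin 2) ℝ) (hf : ∀ i, (f i).totalDegree ≤ 1) :
    (MvPolynomial.bind₁ f p).totalDegree ≤ k := by
  rw [p.as_sum, map_sum]
  refine MvPolynomial.totalDegree_finsetSum_le fun m hm => ?_
  rw [MvPolynomial.bind₁_monomial]
  refine (MvPolynomial.totalDegree_mul _ _).trans ?_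
  rw [MvPolynomial.totalDegree_C, zero_add]
  refine (MvPolynomial.totalDegree_finsetProd _ _).trans ?_
  refine le_trans (Finset.sum_le_sum fun i _ => ?_) ((MvPolynomial.le_totalDegree hm).trans hp)
  refine (MvPolynomial.totalDegree_pow _ _).trans ?_
  simpa using Nat.mul_le_mul_left (m i) (hf i)

lemma setIntegral_closedBall_affine (f : EuclideanSpace ℝ (Fin 2) → ℝ)
    (c : EuclideanSpace ℝ (Fin 2)) {h : ℝ} (hh : 0 < h) (ρ : ℝ) :
    ∫ x in Metric.closedBall (0 : EuclideanSpace ℝ (Fin 2)) ρ, f (c + h • x) =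
      (h ^ 2)⁻¹ * ∫ x in Metric.closedBall c (ρ * h), f x := by
  rw [Measure.setIntegral_comp_smul_of_pos volume (fun x => f (c + x)) _ hh,
    smul_closedBall' hh.ne', smul_zero, finrank_euclideanSpace_fin, smul_eq_mul]
  congr 1
  have := (measurePreserving_add_left volume c).setIntegral_preimage_emb
    (measurableEmbedding_addLeft c) f (Metric.closedBall c (ρ * h))
  rw [← this, preimage_add_closedBall, sub_self, Real.norm_of_nonneg hh.le, mul_comm]

/-- The inequality `exists_sq_eval_le_integral` on a disc of radius `h` about `c`, obtained by the
substitution `x ↦ c + h x`; the constant does not depend on `c` and `h`. -/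
lemma exists_sq_eval_le_integral_scaled (k : ℕ) {ρ : ℝ} (hρ : 0 < ρ) :
    ∃ M : ℝ, 0 < M ∧ ∀ p : MvPolynomial (Fin 2) ℝ, p.totalDegree ≤ k →
      ∀ (c : EuclideanSpace ℝ (Fin 2)) (h : ℝ), 0 < h → ∀ y ∈ Metric.closedBall c h,
        (MvPolynomial.eval (fun i => y i) p) ^ 2 ≤
          M * ((h ^ 2)⁻¹ * ∫ x in Metric.closedBall c (ρ * h),
            (MvPolynomial.eval (fun i => x i) p) ^ 2) := by
  obtain ⟨M, hM, H⟩ := exists_sq_eval_le_integral k hρ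
  refine ⟨M, hM, fun p hp c h hh y hy => ?_⟩
  let f : Fin 2 → MvPolynomial (Fin 2) ℝ := fun i =>
    MvPolynomial.C (c i) + MvPolynomial.C h * MvPolynomial.X i
  have hf : ∀ i, (f i).totalDegree ≤ 1 := fun i => by
    refine (MvPolynomial.totalDegree_add _ _).trans (max_le (by simp) ?_)
    refine (MvPolynomial.totalDegree_mul _ _).trans ?_
    simp
  have heval : ∀ x : EuclideanSpace ℝ (Fin 2),
      MvPolynomial.eval (fun i => x i) (MvPolynomial.bind₁ f p) =
        MvPolynomial.eval (fun i => (c + h • x) i) p := fun x => by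
    simp only [MvPolynomial.eval, MvPolynomial.eval₂Hom_bind₁]
    simp [f]
  have key := H _ (totalDegree_bind₁_le hp f hf) (h⁻¹ • (y - c)) (by
    rw [mem_closedBall_zero_iff, norm_smul, Real.norm_of_nonneg (by positivity),
      inv_mul_le_iff₀ hh, mul_one]
    simpa [dist_eq_norm] using hy)
  simp only [heval] at key
  rw [setIntegral_closedBall_affine (fun x => (MvPolynomial.eval (fun i => x i) p) ^ 2) c hh ρ,
    smul_smul, mul_inv_cancel₀ hh.ne', one_smul, add_sub_cancel] at key
  exact key

/-- Discrete trace inequality: for shape-regular compact convex sets `K ⊆ ℝ²` of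
diameter at most `h` containing a ball of radius `ρ·h`, and polynomials `p` of total
degree at most `k`, one has
`∫_{∂K} p² dμH¹ ≤ C (h⁻¹ ∫_K p² + h ∫_K ‖∇p‖²)`, with `C` depending only on `k`, `ρ`. -/
theorem discrete_trace_inequality (k : ℕ) (ρ : ℝ) (hρ : ρ ∈ Set.Ioo (0 : ℝ) 1) :
    ∃ C : ℝ, 0 < C ∧
      ∀ h : ℝ, 0 < h →
      ∀ K : Set (EuclideanSpace ℝ (Fin 2)), IsCompact K → Convex ℝ K →
        Metric.diam K ≤ h →
        (∃ c : EuclideanSpace ℝ (Fin 2), Metric.closedBall c (ρ * h) ⊆ K) →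
      ∀ p : MvPolynomial (Fin 2) ℝ, p.totalDegree ≤ k →
        (∫ x in frontier K, (MvPolynomial.eval (fun i => x i) p) ^ 2 ∂(μH[1])) ≤
          C * (h⁻¹ * (∫ x in K, (MvPolynomial.eval (fun i => x i) p) ^ 2) +
            h * ∫ x in K, ‖gradient (fun y : EuclideanSpace ℝ (Fin 2) =>
              MvPolynomial.eval (fun i => y i) p) x‖ ^ 2) := by
  have hρ0 : 0 < ρ := hρ.1
  obtain ⟨M, hM, H⟩ := exists_sq_eval_le_integral_scaled k hρ0
  set A : ℝ := 2 * (1 + 1 / ρ) * (2 * Real.pi) with hA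
  have hApos : 0 < A := by positivity
  refine ⟨M * A, by positivity, fun h hh K hKc hK hd ⟨c, hc⟩ p hp => ?_⟩
  have hcK : c ∈ K := hc (Metric.mem_closedBall_self (by positivity))
  have hKR : K ⊆ Metric.closedBall c h := fun x hx =>
    (Metric.dist_le_diam_of_mem hKc.isBounded hx hcK).trans hd
  have hper : μH[1] (frontier K) ≤ ENNReal.ofReal (A * h) := by
    refine (hausdorffMeasure_frontier_le hK (by positivity) hh hc hKR).trans (le_of_eq ?_)
    congr 1
    rw [hA]
    field_simp
  have hreal : (μH[1] : Measure (EuclideanSpace ℝ (Fin 2))).real (frontier K) ≤ A * h :=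
    ENNReal.toReal_le_of_le_ofReal (by positivity) hper
  set I := ∫ x in K, (MvPolynomial.eval (fun i => x i) p) ^ 2 with hI
  set G := ∫ x in K, ‖gradient (fun y : EuclideanSpace ℝ (Fin 2) =>
              MvPolynomial.eval (fun i => y i) p) x‖ ^ 2 with hG
  have hI0 : 0 ≤ I := integral_nonneg fun x => sq_nonneg _
  have hG0 : 0 ≤ G := integral_nonneg fun x => sq_nonneg _
  have hBI : ∫ x in Metric.closedBall c (ρ * h), (MvPolynomial.eval (fun i => x i) p) ^ 2 ≤ I :=
    setIntegral_mono_set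
      (((continuous_evalEuclidean p).pow 2).continuousOn.integrableOn_compact hKc)
      (Filter.Eventually.of_forall fun x => sq_nonneg _) (Filter.Eventually.of_forall hc)
  have hsup : ∀ y ∈ frontier K,
      ‖(MvPolynomial.eval (fun i => y i) p) ^ 2‖ ≤ M * ((h ^ 2)⁻¹ * I) := fun y hy => by
    rw [Real.norm_of_nonneg (sq_nonneg _)]
    refine (H p hp c h hh y (hKR (hKc.isClosed.frontier_subset hy))).trans ?_
    gcongr
  calc _ ≤ ‖∫ x in frontier K, (MvPolynomial.eval (fun i => x i) p) ^ 2 ∂(μH[1])‖ :=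
        Real.le_norm_self _
    _ ≤ M * ((h ^ 2)⁻¹ * I) * (μH[1] : Measure (EuclideanSpace ℝ (Fin 2))).real (frontier K) :=
        norm_setIntegral_le_of_norm_le_const (hper.trans_lt ENNReal.ofReal_lt_top) hsup
    _ ≤ M * ((h ^ 2)⁻¹ * I) * (A * h) := by gcongr
    _ = M * A * (h⁻¹ * I) := by field_simp
    _ ≤ M * A * (h⁻¹ * I + h * G) := by
        gcongr
        exact le_add_of_nonneg_right (by positivity)
end

section
/- For every natural number k and every ρ ∈ (0,1) there exists a constant C > 0 (depending only on k and ρ) such that: for every h > 0, every ρ-shape-regular compact convex set K ⊆ ℝ² with diameter at most h that contains a closed ball of radius ρ·h, and every polynomial p in two real variables of total degree at most k, one has ∫_{∂K} p(x)² dμH¹(x) ≤ C·h^{-1}·∫_K p(x)² dx, where ∂K is the topological boundary (frontier) of K and μH¹ is the 1-dimensional Hausdorff measure. -/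
/-!
Since `closedBall c (ρ h) ⊆ K ⊆ closedBall c h`, it suffices to multiply two estimates.

* `exists_sup_le`: `sup_K p² ≤ C h⁻² ∫_K p²`. After rescaling to `c = 0`, `h = 1`, this is the
  equivalence of norms on the finite-dimensional space of polynomials of bounded degree, between
  the sup norm on the unit disc and the `L²` norm on the disc of radius `ρ`. It is obtained by
  minimizing `∫ p²` over the unit sphere of coefficient vectors; the minimum is positive because
  a polynomial vanishing on a disc is zero.
* `hausdorffMeasure_frontier_le`: `∂K` has length at most `8 π h`. By Hahn-Banach each boundary
  point has an outer normal, which is followed until it meets the circle of radius `2 h` about `c`.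
  The resulting map from `∂K` to the circle does not decrease distances (its inverse is the
  nearest-point projection onto `K`), so the length of `∂K` is controlled by that of the circle.
-/

open MeasureTheory

/-! ### Polynomials: sup norm against `L²` norm -/

/-- Substituting affine functions of the variables does not raise the total degree. -/
lemma exists_affine_comp (p : MvPolynomial (Fin 2) ℝ) (k : ℕ) (hp : p.totalDegree ≤ k)
    (c : EuclideanSpace ℝ (Fin 2)) (h : ℝ) :
    ∃ q : MvPolynomial (Fin 2) ℝ, q.totalDegree ≤ k ∧
      ∀ x : EuclideanSpace ℝ (Fin 2),
        MvPolynomial.eval (fun i => x i) q = MvPolynomial.eval (fun i => (c + h • x) i) p := by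
  let L : Fin 2 → MvPolynomial (Fin 2) ℝ := fun i =>
    MvPolynomial.C (c i) + MvPolynomial.C h * MvPolynomial.X i
  have hL : ∀ i, (L i).totalDegree ≤ 1 := by
    intro i
    refine (MvPolynomial.totalDegree_add _ _).trans (max_le (by simp) ?_)
    refine (MvPolynomial.totalDegree_mul _ _).trans (by simp)
  refine ⟨∑ d ∈ p.support, MvPolynomial.C (p.coeff d) * ∏ i, L i ^ d i, ?_, ?_⟩
  · refine MvPolynomial.totalDegree_finsetSum_le fun d hd => ?_
    refine (MvPolynomial.totalDegree_mul _ _).trans ?_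
    rw [MvPolynomial.totalDegree_C, zero_add]
    refine (MvPolynomial.totalDegree_finsetProd _ _).trans ?_
    have h1 : ∑ i, (L i ^ d i).totalDegree ≤ ∑ i, d i := Finset.sum_le_sum fun i _ =>
      (MvPolynomial.totalDegree_pow _ _).trans
        ((Nat.mul_le_mul_left _ (hL i)).trans (mul_one _).le)
    have h2 := MvPolynomial.le_totalDegree hd
    rw [Finsupp.sum_fintype _ _ (fun _ => rfl)] at h2
    exact h1.trans (h2.trans hp)
  · intro x
    rw [MvPolynomial.eval_eq' (fun i => (c + h • x) i) p]
    simp [L]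

lemma eq_zero_of_setIntegral_closedBall_eq_zero {g : EuclideanSpace ℝ (Fin 2) → ℝ}
    (hg : Continuous g) (hg0 : ∀ x, 0 ≤ g x) {ρ : ℝ}
    (h0 : ∫ y in Metric.closedBall (0 : EuclideanSpace ℝ (Fin 2)) ρ, g y = 0) :
    ∀ x ∈ Metric.ball (0 : EuclideanSpace ℝ (Fin 2)) ρ, g x = 0 := by
  have hint : IntegrableOn g (Metric.closedBall (0 : EuclideanSpace ℝ (Fin 2)) ρ) :=
    hg.continuousOn.integrableOn_compact (isCompact_closedBall _ _)
  rw [integral_eq_zero_iff_of_nonneg hg0 hint] at h0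
  have h1 : g =ᵐ[volume.restrict (Metric.ball (0 : EuclideanSpace ℝ (Fin 2)) ρ)] fun _ => 0 :=
    ae_restrict_of_ae_restrict_of_subset Metric.ball_subset_closedBall h0
  intro x hx
  exact Measure.eqOn_open_of_ae_eq h1 Metric.isOpen_ball hg.continuousOn continuousOn_const hx

/-- The value at `x` of the polynomial with exponents in `S` and coefficient vector `a`. -/
noncomputable def polyVal (S : Finset (Fin 2 →₀ ℕ)) (a : S → ℝ)
    (x : EuclideanSpace ℝ (Fin 2)) : ℝ :=
  ∑ d : S, a d * ∏ i, x i ^ (d : Fin 2 →₀ ℕ) i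

lemma continuous_polyVal (S : Finset (Fin 2 →₀ ℕ)) :
    Continuous (Function.uncurry (polyVal S)) := by
  simp only [polyVal, Function.uncurry_def]
  fun_prop

lemma polyVal_smul (S : Finset (Fin 2 →₀ ℕ)) (t : ℝ) (a : S → ℝ)
    (x : EuclideanSpace ℝ (Fin 2)) : polyVal S (t • a) x = t * polyVal S a x := by
  simp only [polyVal, Finset.mul_sum, Pi.smul_apply, smul_eq_mul, mul_assoc]

/-- A polynomial vanishing on a disc has zero coefficients. -/
lemma eq_zero_of_polyVal_eq_zero {S : Finset (Fin 2 →₀ ℕ)} {a : S → ℝ} {ρ : ℝ} (hρ : 0 < ρ)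
    (hball : ∀ x ∈ Metric.ball (0 : EuclideanSpace ℝ (Fin 2)) ρ, polyVal S a x = 0) :
    a = 0 := by
  let P : MvPolynomial (Fin 2) ℝ :=
    ∑ d : S, MvPolynomial.monomial (d : Fin 2 →₀ ℕ) (a d)
  have hP : ∀ x : EuclideanSpace ℝ (Fin 2),
      MvPolynomial.eval (fun i => x i) P = polyVal S a x := by
    intro x
    simp only [P, polyVal, map_sum, MvPolynomial.eval_monomial,
      Finsupp.prod_fintype _ _ (fun _ => pow_zero _)]
  have hP0 : P = 0 := by
    -- A square inside the disc suffices to determine the polynomial.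
    refine MvPolynomial.funext_set (fun _ => Set.Ioo 0 (ρ / 2))
      (fun _ => Set.Ioo_infinite (by positivity)) fun x hx => ?_
    have := hP (WithLp.toLp 2 x)
    rw [hball] at this
    · simpa using this
    · rw [mem_ball_zero_iff, EuclideanSpace.norm_eq, Real.sqrt_lt' hρ, Fin.sum_univ_two]
      have h0 := hx 0 (Set.mem_univ _)
      have h1 := hx 1 (Set.mem_univ _)
      simp only [Real.norm_eq_abs, sq_abs]
      simp only [Set.mem_Ioo] at h0 h1
      nlinarith
  ext d
  have := congrArg (MvPolynomial.coeff (d : Fin 2 →₀ ℕ)) hP0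
  simpa [P, MvPolynomial.coeff_sum, MvPolynomial.coeff_monomial, ← Subtype.ext_iff] using this

/-- The `L²` norm on a disc controls the coefficients: both sides are homogeneous of degree two
in `a`, so it suffices to minimize the integral over the compact unit sphere. -/
lemma exists_norm_sq_le_integral (S : Finset (Fin 2 →₀ ℕ)) {ρ : ℝ} (hρ : 0 < ρ) :
    ∃ m : ℝ, 0 < m ∧ ∀ a : S → ℝ, m * ‖a‖ ^ 2 ≤
      ∫ y in Metric.closedBall (0 : EuclideanSpace ℝ (Fin 2)) ρ, (polyVal S a y) ^ 2 := by
  rcases isEmpty_or_nonempty S with hS | hS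
  · exact ⟨1, one_pos, fun a => by
      simpa [Subsingleton.elim a 0] using integral_nonneg fun x => sq_nonneg _⟩
  have hQc : Continuous (Function.uncurry fun a x => (polyVal S a x) ^ 2) :=
    (continuous_polyVal S).pow 2
  have hFc : Continuous fun a : S → ℝ =>
      ∫ y in Metric.closedBall (0 : EuclideanSpace ℝ (Fin 2)) ρ, (polyVal S a y) ^ 2 :=
    continuous_parametric_integral_of_continuous hQc (isCompact_closedBall _ _)
  have hF0 : ∀ a : S → ℝ,
      0 ≤ ∫ y in Metric.closedBall (0 : EuclideanSpace ℝ (Fin 2)) ρ, (polyVal S a y) ^ 2 :=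
    fun a => integral_nonneg fun x => sq_nonneg _
  obtain ⟨a₀, ha₀, hmin⟩ := (isCompact_sphere (0 : S → ℝ) 1).exists_isMinOn
    (NormedSpace.sphere_nonempty.2 zero_le_one) hFc.continuousOn
  refine ⟨_, lt_of_le_of_ne (hF0 a₀) fun h0 => ?_, fun a => ?_⟩
  · refine ne_zero_of_mem_unit_sphere ⟨a₀, ha₀⟩ (eq_zero_of_polyVal_eq_zero hρ fun x hx => ?_)
    exact (pow_eq_zero_iff two_ne_zero).1
      (eq_zero_of_setIntegral_closedBall_eq_zero (hQc.comp (Continuous.prodMk_right a₀))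
        (fun _ => sq_nonneg _) h0.symm x hx)
  · rcases eq_or_ne a 0 with rfl | ha
    · simpa using hF0 0
    have hna : 0 < ‖a‖ := norm_pos_iff.2 ha
    have h1 := isMinOn_iff.1 hmin (‖a‖⁻¹ • a) (by simp [norm_smul, hna.ne'])
    simp only [polyVal_smul, mul_pow, integral_const_mul] at h1
    rwa [inv_pow, inv_mul_eq_div, le_div_iff₀ (by positivity)] at h1

lemma abs_polyVal_le (S : Finset (Fin 2 →₀ ℕ)) (a : S → ℝ) {x : EuclideanSpace ℝ (Fin 2)}
    (hx : ‖x‖ ≤ 1) : |polyVal S a x| ≤ S.card * ‖a‖ := by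
  have hxi : ∀ i, |x i| ≤ 1 := fun i => (PiLp.norm_apply_le x i).trans hx
  calc |polyVal S a x| ≤ ∑ d : S, |a d * ∏ i, x i ^ (d : Fin 2 →₀ ℕ) i| :=
        Finset.abs_sum_le_sum_abs _ _
    _ ≤ ∑ d : S, ‖a‖ := by
        refine Finset.sum_le_sum fun d _ => ?_
        rw [abs_mul, Finset.abs_prod]
        have h1 : ∏ i, |x i ^ (d : Fin 2 →₀ ℕ) i| ≤ 1 :=
          Finset.prod_le_one (fun _ _ => abs_nonneg _) fun i _ => by
            rw [abs_pow]; exact pow_le_one₀ (abs_nonneg _) (hxi i)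
        calc |a d| * _ ≤ ‖a‖ * 1 :=
              mul_le_mul (norm_le_pi_norm a d) h1
                (Finset.prod_nonneg fun _ _ => abs_nonneg _) (norm_nonneg _)
          _ = ‖a‖ := mul_one _
    _ = S.card * ‖a‖ := by simp

lemma eval_eq_polyVal {S : Finset (Fin 2 →₀ ℕ)} {p : MvPolynomial (Fin 2) ℝ}
    (hS : p.support ⊆ S) (y : EuclideanSpace ℝ (Fin 2)) :
    MvPolynomial.eval (fun i => y i) p = polyVal S (fun d => p.coeff d) y := by
  rw [MvPolynomial.eval_eq', polyVal,
    Finset.sum_coe_sort S (fun d => p.coeff d * ∏ i, y i ^ d i)]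
  refine Finset.sum_subset hS fun d _ hd => ?_
  simp [MvPolynomial.notMem_support_iff.1 hd]

/-- Finitely many exponents suffice for all polynomials of total degree at most `k`. -/
lemma exists_finset_support_subset (k : ℕ) : ∃ S : Finset (Fin 2 →₀ ℕ),
    ∀ p : MvPolynomial (Fin 2) ℝ, p.totalDegree ≤ k → p.support ⊆ S := by
  refine ⟨Finset.Iic (Finsupp.equivFunOnFinite.symm fun _ => k), fun p hp d hd => ?_⟩
  have h2 := MvPolynomial.le_totalDegree hd
  rw [Finsupp.sum_fintype _ _ (fun _ => rfl)] at h2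
  rw [Finset.mem_Iic]
  intro i
  exact (Finset.single_le_sum (f := fun i => d i) (fun _ _ => Nat.zero_le _)
    (Finset.mem_univ i)).trans (h2.trans hp)

/-- Equivalence of norms on a finite-dimensional space of polynomials: the sup norm on the unit
disc is controlled by the `L²` norm on the concentric disc of radius `ρ`. -/
lemma exists_sup_le_reference (k : ℕ) (ρ : ℝ) (hρ : 0 < ρ) :
    ∃ C : ℝ, 0 < C ∧ ∀ p : MvPolynomial (Fin 2) ℝ, p.totalDegree ≤ k →
      ∀ x : EuclideanSpace ℝ (Fin 2), ‖x‖ ≤ 1 →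
        (MvPolynomial.eval (fun i => x i) p) ^ 2 ≤
          C * ∫ y in Metric.closedBall (0 : EuclideanSpace ℝ (Fin 2)) ρ,
            (MvPolynomial.eval (fun i => y i) p) ^ 2 := by
  obtain ⟨S, hS⟩ := exists_finset_support_subset k
  obtain ⟨m, hm0, hm⟩ := exists_norm_sq_le_integral S hρ
  -- The summand `1` keeps the constant positive.
  refine ⟨((S.card : ℝ) + 1) ^ 2 / m, by positivity, fun p hp x hx => ?_⟩
  simp only [eval_eq_polyVal (hS p hp)]
  set a : S → ℝ := fun d => p.coeff d
  calc (polyVal S a x) ^ 2 = |polyVal S a x| ^ 2 := (sq_abs _).symm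
    _ ≤ (((S.card : ℝ) + 1) * ‖a‖) ^ 2 := by
        gcongr
        exact (abs_polyVal_le S a hx).trans
          (mul_le_mul_of_nonneg_right (by linarith) (norm_nonneg _))
    _ = ((S.card : ℝ) + 1) ^ 2 / m * (m * ‖a‖ ^ 2) := by field_simp
    _ ≤ _ := mul_le_mul_of_nonneg_left (hm a) (by positivity)

/-- Scaled form of `exists_sup_le_reference`, on the discs of radii `h` and `ρ h` about `c`. -/
lemma exists_sup_le (k : ℕ) (ρ : ℝ) (hρ : 0 < ρ) :
    ∃ C : ℝ, 0 < C ∧ ∀ (h : ℝ), 0 < h → ∀ (c : EuclideanSpace ℝ (Fin 2)),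
      ∀ p : MvPolynomial (Fin 2) ℝ, p.totalDegree ≤ k →
      ∀ x ∈ Metric.closedBall c h,
        (MvPolynomial.eval (fun i => x i) p) ^ 2 ≤
          C * (h ^ 2)⁻¹ * ∫ y in Metric.closedBall c (ρ * h),
            (MvPolynomial.eval (fun i => y i) p) ^ 2 := by
  obtain ⟨C, hC, H⟩ := exists_sup_le_reference k ρ hρ
  refine ⟨C, hC, fun h hh c p hp x hx => ?_⟩
  obtain ⟨q, hq, hqe⟩ := exists_affine_comp p k hp c h
  have key := H q hq (h⁻¹ • (x - c)) (by
    rw [norm_smul, norm_inv, Real.norm_of_nonneg hh.le, ← dist_eq_norm, inv_mul_le_iff₀ hh,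
      mul_one]
    exact hx)
  rw [hqe, smul_inv_smul₀ hh.ne', add_sub_cancel] at key
  refine key.trans_eq ?_
  rw [mul_assoc]
  congr 1
  simp only [hqe]
  rw [Measure.setIntegral_comp_smul_of_pos volume
    (fun z : EuclideanSpace ℝ (Fin 2) => (MvPolynomial.eval (fun i => (c + z) i) p) ^ 2) _ hh,
    finrank_euclideanSpace_fin, smul_eq_mul, smul_closedBall _ _ hρ.le, smul_zero,
    Real.norm_of_nonneg hh.le, mul_comm h ρ]
  congr 1
  have hpre : (fun z => c + z) ⁻¹' Metric.closedBall c (ρ * h) =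
      Metric.closedBall (0 : EuclideanSpace ℝ (Fin 2)) (ρ * h) := by
    ext z; simp
  rw [← hpre]
  exact (measurePreserving_add_left volume c).setIntegral_preimage_emb
    (measurableEmbedding_addLeft c)
    (fun z : EuclideanSpace ℝ (Fin 2) => (MvPolynomial.eval (fun i => z i) p) ^ 2) _

/-! ### Length of the boundary of a convex set -/

/-- The circle of radius `r` about `c`, parametrized by the angle. -/
noncomputable def circlePt (c : EuclideanSpace ℝ (Fin 2)) (r θ : ℝ) : EuclideanSpace ℝ (Fin 2) :=
  c + r • !₂[Real.cos θ, Real.sin θ]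

lemma dist_circlePt_le (c : EuclideanSpace ℝ (Fin 2)) {r : ℝ} (hr : 0 ≤ r) (s t : ℝ) :
    dist (circlePt c r s) (circlePt c r t) ≤ 2 * r * dist s t := by
  rw [circlePt, circlePt, dist_add_left, dist_smul₀, Real.norm_of_nonneg hr, mul_comm 2 r,
    mul_assoc]
  refine mul_le_mul_of_nonneg_left ?_ hr
  rw [EuclideanSpace.dist_eq, Fin.sum_univ_two, Real.sqrt_le_left (by positivity)]
  have h1 := sq_le_sq' (neg_le_of_abs_le (Real.abs_cos_sub_cos_le s t))
    (le_of_abs_le (Real.abs_cos_sub_cos_le s t))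
  have h2 := sq_le_sq' (neg_le_of_abs_le (Real.abs_sin_sub_sin_le s t))
    (le_of_abs_le (Real.abs_sin_sub_sin_le s t))
  simp only [Real.dist_eq, sq_abs, mul_pow, Matrix.cons_val_zero, Matrix.cons_val_one] at h1 h2 ⊢
  nlinarith [sq_nonneg (s - t)]

lemma exists_circlePt (c x : EuclideanSpace ℝ (Fin 2)) {r : ℝ} (hx : ‖x - c‖ = r) :
    ∃ θ ∈ Set.Icc (-Real.pi) Real.pi, circlePt c r θ = x := by
  let z : ℂ := ⟨(x - c) 0, (x - c) 1⟩
  have hz : ‖z‖ = r := by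
    rw [← hx, EuclideanSpace.norm_eq, Fin.sum_univ_two, Complex.norm_def, Complex.normSq_apply]
    simp [z, sq]
  refine ⟨z.arg, ⟨(Complex.neg_pi_lt_arg z).le, Complex.arg_le_pi z⟩, ?_⟩
  have h1 := Complex.norm_mul_cos_arg z
  have h2 := Complex.norm_mul_sin_arg z
  rw [hz] at h1 h2
  have h3 : z.re = x 0 - c 0 := rfl
  have h4 : z.im = x 1 - c 1 := rfl
  clear_value z
  ext i
  fin_cases i
  · simp [circlePt, h1, h3]
  · simp [circlePt, h2, h4]

/-- If `K` lies in the disc of radius `h` about `c`, each boundary point `y` of `K` has an outer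
normal ray meeting the circle of radius `2 h` about `c`; the conclusion says that the vector from
`y` to the point of angle `θ` on that circle is an outer normal. -/
lemma exists_normal_to_circle {K : Set (EuclideanSpace ℝ (Fin 2))} (hK : IsClosed K)
    (hconv : Convex ℝ K) (hint : (interior K).Nonempty) {c : EuclideanSpace ℝ (Fin 2)} {h : ℝ}
    (hh : 0 < h) (hsub : K ⊆ Metric.closedBall c h)
    (y : EuclideanSpace ℝ (Fin 2)) (hy : y ∈ frontier K) :
    ∃ θ ∈ Set.Icc (-Real.pi) Real.pi, ∀ z ∈ K,
      inner ℝ (circlePt c (2 * h) θ - y) (z - y) ≤ 0 := by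
  rw [hK.frontier_eq] at hy
  obtain ⟨f, hf0, hf⟩ := geometric_hahn_banach_of_nonempty_interior_point hconv hy.2 hint
  let n := (InnerProductSpace.toDual ℝ (EuclideanSpace ℝ (Fin 2))).symm f
  have hn : ∀ z, inner ℝ n z = f z := fun z => InnerProductSpace.toDual_symm_apply
  have hn0 : 0 < ‖n‖ := norm_pos_iff.2 (by simpa [n] using hf0)
  have hyc : ‖y - c‖ ≤ h := by simpa [dist_eq_norm] using hsub hy.1
  -- The normal ray from `y` starts inside the circle and leaves it by time `3 h / ‖n‖`.
  have hT : 0 ≤ 3 * h / ‖n‖ := by positivity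
  have hcont : ContinuousOn (fun t : ℝ => ‖y + t • n - c‖) (Set.Icc 0 (3 * h / ‖n‖)) := by
    fun_prop
  have hmem : 2 * h ∈ Set.Icc ‖y + (0 : ℝ) • n - c‖ ‖y + (3 * h / ‖n‖) • n - c‖ := by
    constructor
    · simp only [zero_smul, add_zero]; linarith
    · have h1 : ‖(3 * h / ‖n‖) • n‖ = 3 * h := by
        rw [norm_smul, Real.norm_of_nonneg hT]; field_simp
      have h2 : ‖(3 * h / ‖n‖) • n‖ ≤ ‖y + (3 * h / ‖n‖) • n - c‖ + ‖y - c‖ := by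
        refine (norm_sub_le (y + (3 * h / ‖n‖) • n - c) (y - c)).trans' (le_of_eq ?_)
        congr 1; abel
      linarith
  obtain ⟨t, ht, hte⟩ := intermediate_value_Icc hT hcont hmem
  obtain ⟨θ, hθ, hθe⟩ := exists_circlePt c (y + t • n) hte
  refine ⟨θ, hθ, fun z hz => ?_⟩
  rw [hθe, add_sub_cancel_left, real_inner_smul_left, hn, map_sub]
  exact mul_nonpos_of_nonneg_of_nonpos ht.1 (sub_nonpos.2 (hf z hz))

/-- Moving two points of a convex set outwards along normals does not bring them closer; this is
the reason why the nearest-point projection is `1`-Lipschitz. The hypotheses say that `x - y` and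
`x' - y'` are outer normals at `y` and `y'` as far as the other point is concerned. -/
lemma dist_le_of_normal {y y' x x' : EuclideanSpace ℝ (Fin 2)}
    (h1 : inner ℝ (x - y) (y' - y) ≤ 0) (h2 : inner ℝ (x' - y') (y - y') ≤ 0) :
    dist y y' ≤ dist x x' := by
  rw [dist_eq_norm, dist_eq_norm]
  have e : inner ℝ (x - x') (y - y') =
      ‖y - y'‖ ^ 2 - inner ℝ (x - y) (y' - y) - inner ℝ (x' - y') (y - y') := by
    rw [← real_inner_self_eq_norm_sq]
    simp only [inner_sub_left, inner_sub_right]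
    ring
  have h3 := real_inner_le_norm (x - x') (y - y')
  rcases (norm_nonneg (y - y')).eq_or_lt with h0 | h0
  · rw [← h0]; exact norm_nonneg _
  · exact le_of_mul_le_mul_right (by nlinarith) h0

/-- The boundary of a convex body in a disc of radius `h` has length at most `8πh`: it is the image
of a subset of `[-π, π]` under a `4h`-Lipschitz map. -/
lemma hausdorffMeasure_frontier_le_s3 {K : Set (EuclideanSpace ℝ (Fin 2))} (hK : IsClosed K)
    (hconv : Convex ℝ K) (hint : (interior K).Nonempty) {c : EuclideanSpace ℝ (Fin 2)} {h : ℝ}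
    (hh : 0 < h) (hsub : K ⊆ Metric.closedBall c h) :
    μH[1] (frontier K) ≤ ENNReal.ofReal (8 * Real.pi * h) := by
  choose! θ hθ hnormal using exists_normal_to_circle hK hconv hint hh hsub
  have hdist : ∀ y ∈ frontier K, ∀ y' ∈ frontier K, dist y y' ≤ 4 * h * dist (θ y) (θ y') := by
    intro y hy y' hy'
    have h1 := dist_le_of_normal (hnormal y hy y' (hK.frontier_subset hy'))
      (hnormal y' hy' y (hK.frontier_subset hy))
    refine h1.trans ((dist_circlePt_le c (by positivity) _ _).trans (le_of_eq (by ring)))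
  have hinj : Set.InjOn θ (frontier K) := by
    intro y hy y' hy' he
    have := hdist y hy y' hy'
    rw [he, dist_self, mul_zero] at this
    exact dist_le_zero.1 this
  let G := Function.invFunOn θ (frontier K)
  have hG : ∀ y ∈ frontier K, G (θ y) = y := fun y hy => hinj.leftInvOn_invFunOn hy
  have hLip : LipschitzOnWith (Real.toNNReal (4 * h)) G (θ '' frontier K) := by
    refine LipschitzOnWith.of_dist_le_mul ?_
    rintro _ ⟨y, hy, rfl⟩ _ ⟨y', hy', rfl⟩
    rw [hG y hy, hG y' hy', Real.coe_toNNReal _ (by positivity)]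
    exact hdist y hy y' hy'
  have himg : frontier K = G '' (θ '' frontier K) := by
    rw [Set.image_image]
    exact ((Set.image_congr hG).trans (Set.image_id' _)).symm
  have hsubI : θ '' frontier K ⊆ Set.Icc (-Real.pi) Real.pi := by
    rintro _ ⟨y, hy, rfl⟩; exact hθ y hy
  calc μH[1] (frontier K) = μH[1] (G '' (θ '' frontier K)) := by rw [← himg]
    _ ≤ (Real.toNNReal (4 * h) : ENNReal) ^ (1 : ℝ) * μH[1] (θ '' frontier K) :=
        hLip.hausdorffMeasure_image_le zero_le_one
    _ ≤ ENNReal.ofReal (4 * h) * volume (Set.Icc (-Real.pi) Real.pi) := by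
        rw [ENNReal.rpow_one, hausdorffMeasure_real]
        exact mul_le_mul' le_rfl (measure_mono hsubI)
    _ = ENNReal.ofReal (8 * Real.pi * h) := by
        rw [Real.volume_Icc, ← ENNReal.ofReal_mul (by positivity)]
        congr 1; ring

/-! ### The trace inequality -/

/-- Combined discrete trace bound: for shape-regular compact convex sets `K ⊆ ℝ²` of
diameter at most `h` containing a ball of radius `ρ·h`, and polynomials `p` of total
degree at most `k`, one has `∫_{∂K} p² dμH¹ ≤ C h⁻¹ ∫_K p²`, `C` depending only on
`k` and `ρ`. -/
theorem discrete_trace_inverse_inequality (k : ℕ) (ρ : ℝ) (hρ : ρ ∈ Set.Ioo (0 : ℝ) 1) :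
    ∃ C : ℝ, 0 < C ∧
      ∀ h : ℝ, 0 < h →
      ∀ K : Set (EuclideanSpace ℝ (Fin 2)), IsCompact K → Convex ℝ K →
        Metric.diam K ≤ h →
        (∃ c : EuclideanSpace ℝ (Fin 2), Metric.closedBall c (ρ * h) ⊆ K) →
      ∀ p : MvPolynomial (Fin 2) ℝ, p.totalDegree ≤ k →
        (∫ x in frontier K, (MvPolynomial.eval (fun i => x i) p) ^ 2 ∂(μH[1])) ≤
          C * h⁻¹ * ∫ x in K, (MvPolynomial.eval (fun i => x i) p) ^ 2 := by
  obtain ⟨C, hC, hsup⟩ := exists_sup_le k ρ hρ.1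
  refine ⟨C * (8 * Real.pi), by positivity, ?_⟩
  intro h hh K hKc hconv hdiam ⟨c, hball⟩ p hp
  have hρh : 0 < ρ * h := mul_pos hρ.1 hh
  have hcK : c ∈ K := hball (Metric.mem_closedBall_self hρh.le)
  have hsub : K ⊆ Metric.closedBall c h := fun x hx =>
    (Metric.dist_le_diam_of_mem hKc.isBounded hx hcK).trans hdiam
  have hint : (interior K).Nonempty :=
    ⟨c, mem_interior_iff_mem_nhds.2
      (Filter.mem_of_superset (Metric.closedBall_mem_nhds c hρh) hball)⟩
  have hlen := hausdorffMeasure_frontier_le_s3 hKc.isClosed hconv hint hh hsub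
  have hcont : Continuous fun x : EuclideanSpace ℝ (Fin 2) =>
      (MvPolynomial.eval (fun i => x i) p) ^ 2 := by
    refine ((MvPolynomial.continuous_eval p).comp ?_).pow 2
    fun_prop
  set I := ∫ x in K, (MvPolynomial.eval (fun i => x i) p) ^ 2 with hI
  have hI0 : 0 ≤ I := integral_nonneg fun x => sq_nonneg _
  have hpt : ∀ x ∈ frontier K,
      ‖(MvPolynomial.eval (fun i => x i) p) ^ 2‖ ≤ C * (h ^ 2)⁻¹ * I := by
    intro x hx
    rw [Real.norm_of_nonneg (sq_nonneg _)]
    refine (hsup h hh c p hp x (hsub (hKc.isClosed.frontier_subset hx))).trans ?_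
    refine mul_le_mul_of_nonneg_left ?_ (by positivity)
    exact setIntegral_mono_set (hcont.continuousOn.integrableOn_compact hKc)
      (ae_of_all _ fun x => sq_nonneg _) hball.eventuallyLE
  calc _ ≤ ‖∫ x in frontier K, (MvPolynomial.eval (fun i => x i) p) ^ 2 ∂(μH[1])‖ :=
        Real.le_norm_self _
    _ ≤ C * (h ^ 2)⁻¹ * I * (μH[1]).real (frontier K) :=
        norm_setIntegral_le_of_norm_le_const (hlen.trans_lt ENNReal.ofReal_lt_top) hpt
    _ ≤ C * (h ^ 2)⁻¹ * I * (8 * Real.pi * h) := by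
        refine mul_le_mul_of_nonneg_left ?_ (by positivity)
        exact ENNReal.toReal_le_of_le_ofReal (by positivity) hlen
    _ = C * (8 * Real.pi) * h⁻¹ * I := by field_simp
end

section
/- For every natural number k and every ρ ∈ (0,1) there exists a constant C > 0 (depending only on k and ρ) such that the following holds. Let I be a finite index set and for each i ∈ I let K_i ⊆ ℝ² be a compact convex set with diameter h_i > 0 containing a closed ball of radius ρ·h_i, and let q_i be a polynomial in two real variables of total degree at most k. Then Σ_{i ∈ I} h_i · ∫_{∂K_i} q_i(x)² dμH¹(x) ≤ C · Σ_{i ∈ I} ∫_{K_i} q_i(x)² dx, where ∂K_i is the topological boundary (frontier) of K_i and μH¹ is the 1-dimensional Hausdorff measure. -/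
open MeasureTheory

/-!
On each element, `∫_{∂K} q² ≤ μH¹(∂K) · sup_K q²`, and both factors are controlled by scaling.

* Sup bound (`exists_sq_le_integral_ball_scaled`). Polynomials of degree at most `k` form a
  finite-dimensional space, on which the sup norm over the unit ball is dominated by the `L²` norm
  over the ball of radius `ρ`. Since `K` lies in the ball of radius `h` about `c` and contains
  the ball of radius `ρ h`, an affine change of variables gives
  `sup_K q² ≤ M h⁻² ∫_K q²` with `M` depending only on `k` and `ρ`.
* Perimeter bound (`hausdorffMeasure_frontier_le`). Each boundary point is pushed along an outer
  normal until it hits the circle of radius `h` about `c`. By monotonicity of the normal cone this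
  does not decrease distances, so the angle reached on the circle is an antilipschitz function on
  `∂K` with values in `[-π, π]`, and `μH¹(∂K) ≤ 4π h`.

The constant is therefore `C = 4π M`.
-/

local notation "E2" => EuclideanSpace ℝ (Fin 2)

/-! ### Sup norm and `L²` norm of polynomials -/

theorem continuous_evalE (p : MvPolynomial (Fin 2) ℝ) :
    Continuous (fun x : E2 => MvPolynomial.eval (fun j => x j) p) :=
  (MvPolynomial.continuous_eval p).comp (by fun_prop)

theorem memLp_evalE (p : MvPolynomial (Fin 2) ℝ) (r : ℝ) :
    MemLp (fun x : E2 => MvPolynomial.eval (fun j => x j) p) 2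
      (volume.restrict (Metric.ball (0 : E2) r)) := by
  refine (memLp_two_iff_integrable_sq (continuous_evalE p).aestronglyMeasurable).2 ?_
  exact (((continuous_evalE p).pow 2).continuousOn.integrableOn_compact
    (isCompact_closedBall (0 : E2) r)).mono_set Metric.ball_subset_closedBall

/-- Restriction of polynomials to the open ball of radius `r`, as a linear map into `L²`. -/
noncomputable def toL2Ball (k : ℕ) (r : ℝ) :
    MvPolynomial.restrictTotalDegree (Fin 2) ℝ k →ₗ[ℝ]
      Lp ℝ 2 ((volume : Measure E2).restrict (Metric.ball (0 : E2) r)) where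
  toFun p := (memLp_evalE p.1 r).toLp _
  map_add' p q := by
    rw [← MemLp.toLp_add]
    congr 1
    ext x
    simp
  map_smul' a p := by
    simp only [RingHom.id_apply]
    rw [← MemLp.toLp_const_smul]
    congr 1
    ext x
    simp [MvPolynomial.smul_eval]

/-- Restriction of polynomials to the closed unit ball, as a linear map into `C(B, ℝ)`. -/
noncomputable def toCUnitBall (k : ℕ) :
    MvPolynomial.restrictTotalDegree (Fin 2) ℝ k →ₗ[ℝ]
      C(Metric.closedBall (0 : E2) 1, ℝ) where
  toFun p := ⟨fun x => MvPolynomial.eval (fun j => x.1 j) p.1,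
    (continuous_evalE p.1).comp continuous_subtype_val⟩
  map_add' p q := by ext x; simp
  map_smul' a p := by ext x; simp [MvPolynomial.smul_eval]

theorem norm_toL2Ball_sq (k : ℕ) (r : ℝ) (p : MvPolynomial.restrictTotalDegree (Fin 2) ℝ k) :
    ‖toL2Ball k r p‖ ^ 2 =
      ∫ x in Metric.ball (0 : E2) r, (MvPolynomial.eval (fun j => x j) p.1) ^ 2 := by
  rw [← real_inner_self_eq_norm_sq, L2.inner_def]
  refine integral_congr_ae ?_
  filter_upwards [(memLp_evalE p.1 r).coeFn_toLp] with x hx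
  have : (toL2Ball k r p : E2 → ℝ) x = MvPolynomial.eval (fun j => x j) p.1 := hx
  rw [this, real_inner_self_eq_norm_sq, Real.norm_eq_abs, sq_abs]

theorem toL2Ball_injective (k : ℕ) {r : ℝ} (hr : 0 < r) :
    Function.Injective (toL2Ball k r) := by
  rw [← LinearMap.ker_eq_bot, LinearMap.ker_eq_bot']
  intro p hp
  have h0 : (fun x : E2 => MvPolynomial.eval (fun j => x j) p.1)
      =ᵐ[volume.restrict (Metric.ball (0 : E2) r)] fun _ => (0 : ℝ) := by
    filter_upwards [(memLp_evalE p.1 r).coeFn_toLp,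
      Lp.coeFn_zero ℝ 2 (volume.restrict (Metric.ball (0 : E2) r))] with x hx h0
    have h1 : (toL2Ball k r p : E2 → ℝ) x = MvPolynomial.eval (fun j => x j) p.1 := hx
    rw [← h1, hp, h0]
    rfl
  have h1 := Measure.eqOn_open_of_ae_eq h0 Metric.isOpen_ball
    (continuous_evalE p.1).continuousOn continuousOn_const
  ext1
  -- The ball contains an open square, which is a product of infinite sets.
  refine MvPolynomial.funext_set (fun _ => Set.Ioo (-(r / 2)) (r / 2))
    (fun _ => Set.Ioo_infinite (by linarith)) fun x hx => ?_
  have hx0 := hx 0 trivial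
  have hx1 := hx 1 trivial
  have hmem : WithLp.toLp 2 x ∈ Metric.ball (0 : E2) r := by
    rw [mem_ball_zero_iff, EuclideanSpace.norm_eq, Real.sqrt_lt' hr]
    simp only [Fin.sum_univ_two, Real.norm_eq_abs, sq_abs]
    have := abs_lt.2 hx0
    have := abs_lt.2 hx1
    nlinarith [sq_abs (x 0), sq_abs (x 1), abs_nonneg (x 0), abs_nonneg (x 1)]
  simpa using h1 hmem

/-- Equivalence of norms on polynomials of degree at most `k`: the sup norm on the unit ball
is controlled by the `L²` norm on a concentric ball of radius `r`. -/
theorem exists_sq_le_integral_ball (k : ℕ) {r : ℝ} (hr : 0 < r) :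
    ∃ M : ℝ, 0 < M ∧ ∀ p : MvPolynomial (Fin 2) ℝ, p.totalDegree ≤ k →
      ∀ x : E2, ‖x‖ ≤ 1 → (MvPolynomial.eval (fun j => x j) p) ^ 2 ≤
        M * ∫ y in Metric.ball (0 : E2) r, (MvPolynomial.eval (fun j => y j) p) ^ 2 := by
  -- `T` sends the `L²` class of a polynomial to its restriction to the unit ball; its domain is
  -- finite-dimensional, so it is bounded.
  let e := LinearEquiv.ofInjective (toL2Ball k r) (toL2Ball_injective k hr)
  have : FiniteDimensional ℝ (toL2Ball k r).range := e.finiteDimensional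
  let T := LinearMap.toContinuousLinearMap ((toCUnitBall k) ∘ₗ e.symm.toLinearMap)
  refine ⟨(‖T‖ + 1) ^ 2, by positivity, fun p hp x hx => ?_⟩
  let P : MvPolynomial.restrictTotalDegree (Fin 2) ℝ k :=
    ⟨p, (MvPolynomial.mem_restrictTotalDegree _ _ _).2 hp⟩
  rw [← norm_toL2Ball_sq k r P, ← mul_pow, ← sq_abs]
  refine pow_le_pow_left₀ (abs_nonneg _) ?_ 2
  have h1 : T (e P) = toCUnitBall k P := by simp [T]
  calc |MvPolynomial.eval (fun j => x j) p| ≤ ‖toCUnitBall k P‖ :=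
        (toCUnitBall k P).norm_coe_le_norm ⟨x, by simpa using hx⟩
    _ = ‖T (e P)‖ := by rw [h1]
    _ ≤ ‖T‖ * ‖e P‖ := T.le_opNorm _
    _ = ‖T‖ * ‖toL2Ball k r P‖ := rfl
    _ ≤ (‖T‖ + 1) * ‖toL2Ball k r P‖ := by gcongr; linarith

/-! ### Affine rescaling -/

/-- The polynomial `y ↦ p (c + h • y)`. -/
noncomputable def rescale (c : E2) (h : ℝ) (p : MvPolynomial (Fin 2) ℝ) :
    MvPolynomial (Fin 2) ℝ :=
  MvPolynomial.bind₁ (fun j => MvPolynomial.C (c j) + MvPolynomial.C h * MvPolynomial.X j) p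

theorem eval_rescale (c : E2) (h : ℝ) (p : MvPolynomial (Fin 2) ℝ) (y : E2) :
    MvPolynomial.eval (fun j => y j) (rescale c h p) =
      MvPolynomial.eval (fun j => (c + h • y) j) p := by
  have h1 := MvPolynomial.eval₂Hom_bind₁ (RingHom.id ℝ) (fun j => y j)
    (fun j => MvPolynomial.C (c j) + MvPolynomial.C h * MvPolynomial.X j) p
  refine h1.trans ?_
  rw [MvPolynomial.eval]
  congr 2
  ext j
  simp

theorem totalDegree_rescale_le (c : E2) (h : ℝ) (p : MvPolynomial (Fin 2) ℝ) {k : ℕ}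
    (hp : p.totalDegree ≤ k) : (rescale c h p).totalDegree ≤ k := by
  have hlin : ∀ j : Fin 2, (MvPolynomial.C (c j) + MvPolynomial.C h * MvPolynomial.X j :
      MvPolynomial (Fin 2) ℝ).totalDegree ≤ 1 := fun j => by
    refine (MvPolynomial.totalDegree_add _ _).trans (max_le (by simp) ?_)
    refine (MvPolynomial.totalDegree_mul _ _).trans (by simp)
  rw [rescale, MvPolynomial.bind₁, MvPolynomial.aeval_def, MvPolynomial.eval₂_eq]
  refine (MvPolynomial.totalDegree_finsetSum _ _).trans (Finset.sup_le fun m hm => ?_)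
  refine (MvPolynomial.totalDegree_mul _ _).trans ?_
  rw [MvPolynomial.algebraMap_eq, MvPolynomial.totalDegree_C, zero_add]
  refine (MvPolynomial.totalDegree_finsetProd _ _).trans ?_
  refine le_trans ?_ ((MvPolynomial.le_totalDegree hm).trans hp)
  rw [Finsupp.sum]
  refine Finset.sum_le_sum fun j _ => (MvPolynomial.totalDegree_pow _ _).trans ?_
  simpa using Nat.mul_le_mul_left (m j) (hlin j)

theorem integral_ball_rescale (f : E2 → ℝ) (c : E2) {h : ℝ} (hh : 0 < h) (r : ℝ) :
    ∫ y in Metric.ball (0 : E2) r, f (c + h • y) =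
      (h ^ 2)⁻¹ * ∫ x in Metric.ball c (r * h), f x := by
  rw [Measure.setIntegral_comp_smul_of_pos volume (fun y => f (c + y)) _ hh,
    smul_ball hh.ne', smul_zero, finrank_euclideanSpace_fin, smul_eq_mul,
    ← (measurePreserving_add_left volume c).setIntegral_preimage_emb
      (measurableEmbedding_addLeft c) f, preimage_add_ball, sub_self, Real.norm_of_nonneg hh.le,
      mul_comm h r]

/-- The sup norm over the ball of radius `h` about `c` is controlled by the `L²` norm over the
concentric ball of radius `r * h`; the factor `h⁻²` comes from the area scaling in dimension 2. -/
theorem exists_sq_le_integral_ball_scaled (k : ℕ) {r : ℝ} (hr : 0 < r) :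
    ∃ M : ℝ, 0 < M ∧ ∀ p : MvPolynomial (Fin 2) ℝ, p.totalDegree ≤ k →
      ∀ (c : E2) (h : ℝ), 0 < h → ∀ x : E2, ‖x - c‖ ≤ h →
        (MvPolynomial.eval (fun j => x j) p) ^ 2 ≤
        M * (h ^ 2)⁻¹ *
          ∫ y in Metric.ball c (r * h), (MvPolynomial.eval (fun j => y j) p) ^ 2 := by
  obtain ⟨M, hM, H⟩ := exists_sq_le_integral_ball k hr
  refine ⟨M, hM, fun p hp c h hh x hx => ?_⟩
  have h1 := H (rescale c h p) (totalDegree_rescale_le c h p hp) (h⁻¹ • (x - c)) (by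
    rw [norm_smul, norm_inv, Real.norm_of_nonneg hh.le, inv_mul_le_one₀ hh]
    exact hx)
  simp only [eval_rescale] at h1
  rw [integral_ball_rescale (fun x : E2 => (MvPolynomial.eval (fun j => x j) p) ^ 2) c hh r,
    smul_inv_smul₀ hh.ne', add_sub_cancel, ← mul_assoc] at h1
  exact h1

/-! ### Perimeter of a planar convex body -/

/-- Through every boundary point of a convex body there is a supporting line: `n` is an outer
normal. It comes from separating the point from the open convex set `interior K`, whose closure
contains `K`. -/
theorem exists_outer_normal {K : Set E2} (hc : Convex ℝ K)
    (hi : (interior K).Nonempty) {x : E2} (hx : x ∈ frontier K) :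
    ∃ n : E2, n ≠ 0 ∧ ∀ w ∈ K, inner ℝ n (w - x) ≤ 0 := by
  obtain ⟨f, hf⟩ := geometric_hahn_banach_open_point hc.interior isOpen_interior hx.2
  obtain ⟨z, hz⟩ := hi
  refine ⟨(InnerProductSpace.toDual ℝ E2).symm f, fun h0 => ?_, fun w hw => ?_⟩
  · have := hf z hz
    rw [(InnerProductSpace.toDual ℝ E2).symm.map_eq_zero_iff] at h0
    simp [h0] at this
  · rw [InnerProductSpace.toDual_symm_apply, map_sub, sub_nonpos]
    have hsub : closure (interior K) ⊆ {w | f w ≤ f x} :=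
      closure_minimal (fun a ha => (hf a ha).le) (isClosed_le f.continuous continuous_const)
    refine hsub ?_
    rw [hc.closure_interior_eq_closure_of_nonempty_interior ⟨z, hz⟩]
    exact subset_closure hw

/-- Every ray starting in the closed disc of radius `R` about `c` meets the circle of radius `R` about `c`;
the exit point is recorded by its angle. -/
theorem exists_angle {x c n : E2} {R : ℝ} (hn : n ≠ 0) (hR : ‖x - c‖ ≤ R) :
    ∃ t : ℝ, 0 ≤ t ∧ ∃ θ ∈ Set.Icc (-Real.pi) Real.pi,
      x + t • n = c + R • !₂[Real.cos θ, Real.sin θ] := by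
  have hn' : 0 < ‖n‖ := norm_pos_iff.2 hn
  have hR0 : 0 ≤ R := (norm_nonneg _).trans hR
  obtain ⟨t, ht, htR⟩ : ∃ t ∈ Set.Icc 0 ((R + ‖x - c‖) / ‖n‖), ‖x + t • n - c‖ = R := by
    refine intermediate_value_Icc (f := fun t : ℝ => ‖x + t • n - c‖) (by positivity)
      (by fun_prop) ⟨by simpa using hR, ?_⟩
    have h1 : ‖((R + ‖x - c‖) / ‖n‖) • n‖ = R + ‖x - c‖ := by
      rw [norm_smul, Real.norm_of_nonneg (by positivity), div_mul_cancel₀ _ hn'.ne']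
    have h2 := norm_sub_le (x + ((R + ‖x - c‖) / ‖n‖) • n - c) (x - c)
    rw [show x + ((R + ‖x - c‖) / ‖n‖) • n - c - (x - c) = ((R + ‖x - c‖) / ‖n‖) • n by abel,
      h1] at h2
    show R ≤ ‖x + ((R + ‖x - c‖) / ‖n‖) • n - c‖
    linarith
  refine ⟨t, ht.1, ?_⟩
  set v := x + t • n - c with hv
  let z : ℂ := ⟨v 0, v 1⟩
  have hz : ‖z‖ = R := by
    rw [← htR, EuclideanSpace.norm_eq, Complex.norm_def, Complex.normSq_apply]
    simp [z, sq]
  refine ⟨z.arg, ⟨(Complex.neg_pi_lt_arg z).le, Complex.arg_le_pi z⟩, ?_⟩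
  rw [← sub_eq_iff_eq_add', ← hv]
  ext j
  fin_cases j
  · simpa [hz, z] using (Complex.norm_mul_cos_arg z).symm
  · simpa [hz, z] using (Complex.norm_mul_sin_arg z).symm

/-- Parametrizing the circle of radius `R` by angle is Lipschitz. The sharp constant is `R`;
`2 * R` follows from `cos` and `sin` being 1-Lipschitz and is enough here. -/
theorem dist_circle_le (c : E2) {R : ℝ} (hR : 0 ≤ R) (s t : ℝ) :
    ‖(c + R • !₂[Real.cos s, Real.sin s]) - (c + R • !₂[Real.cos t, Real.sin t])‖ ≤
      2 * R * |s - t| := by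
  rw [add_sub_add_left_eq_sub, ← smul_sub, norm_smul, Real.norm_of_nonneg hR]
  have h1 : ‖!₂[Real.cos s, Real.sin s] - !₂[Real.cos t, Real.sin t]‖ ≤ 2 * |s - t| := by
    rw [EuclideanSpace.norm_eq]
    refine Real.sqrt_le_iff.2 ⟨by positivity, ?_⟩
    simp only [Fin.sum_univ_two, Real.norm_eq_abs]
    have hc := Real.abs_cos_sub_cos_le s t
    have hs := Real.abs_sin_sub_sin_le s t
    simp only [PiLp.sub_apply, Matrix.cons_val_zero, Matrix.cons_val_one]
    nlinarith [abs_nonneg (Real.cos s - Real.cos t), abs_nonneg (Real.sin s - Real.sin t)]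
  nlinarith

/-- Moving outwards along normals does not decrease distances: the two hypotheses give
`⟪x - y, a - b⟫ ≥ 0`. -/
theorem norm_sub_le_of_normals {x y a b : E2} (ha : inner ℝ a (y - x) ≤ 0)
    (hb : inner ℝ b (x - y) ≤ 0) : ‖x - y‖ ≤ ‖(x + a) - (y + b)‖ := by
  have h1 : ‖x - y‖ ^ 2 ≤ inner ℝ (x - y) ((x + a) - (y + b)) := by
    rw [show (x + a) - (y + b) = (x - y) + (a - b) by abel, inner_add_right,
      real_inner_self_eq_norm_sq, inner_sub_right, real_inner_comm a, real_inner_comm b]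
    rw [← neg_sub x y, inner_neg_right] at ha
    linarith
  have h2 := real_inner_le_norm (x - y) ((x + a) - (y + b))
  by_contra! h
  nlinarith [norm_nonneg (x - y), norm_nonneg ((x + a) - (y + b))]

/-- The perimeter of a planar convex body inside a ball of radius `R` is at most `4πR`
(not sharp). -/
theorem hausdorffMeasure_frontier_le_s4 {K : Set E2} (hK : IsClosed K) (hc : Convex ℝ K)
    (hi : (interior K).Nonempty) {c : E2} {R : ℝ} (hR : 0 ≤ R)
    (hKR : ∀ x ∈ K, ‖x - c‖ ≤ R) :
    μH[1] (frontier K) ≤ ENNReal.ofReal (4 * Real.pi * R) := by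
  have hfr : frontier K ⊆ K := hK.frontier_subset
  have key : ∀ x : frontier K, ∃ a : E2, (∀ w ∈ K, inner ℝ a (w - x.1) ≤ 0) ∧
      ∃ θ ∈ Set.Icc (-Real.pi) Real.pi, x.1 + a = c + R • !₂[Real.cos θ, Real.sin θ] := by
    intro x
    obtain ⟨n, hn, hnK⟩ := exists_outer_normal hc hi x.2
    obtain ⟨t, ht, θ, hθ, h⟩ := exists_angle hn (hKR _ (hfr x.2))
    refine ⟨t • n, fun w hw => ?_, θ, hθ, h⟩
    rw [real_inner_smul_left]
    exact mul_nonpos_of_nonneg_of_nonpos ht (hnK w hw)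
  choose a ha θ hθ hθa using key
  have hanti : AntilipschitzWith (2 * R).toNNReal θ := by
    refine AntilipschitzWith.of_le_mul_dist fun x y => ?_
    rw [Subtype.dist_eq, dist_eq_norm, Real.dist_eq, Real.coe_toNNReal _ (by positivity)]
    refine (norm_sub_le_of_normals (ha x _ (hfr y.2)) (ha y _ (hfr x.2))).trans ?_
    rw [hθa, hθa]
    exact dist_circle_le c hR _ _
  have h1 := hanti.le_hausdorffMeasure_image zero_le_one Set.univ
  -- `h1` concerns the Hausdorff measure of the subtype; the inclusion is an isometry.
  have h2 := isometry_subtype_coe.hausdorffMeasure_image (f := ((↑) : frontier K → E2))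
    (d := 1) (Or.inl zero_le_one) Set.univ
  rw [Set.image_univ, Subtype.range_coe] at h2
  rw [h2]
  refine h1.trans ?_
  calc _ ≤ ((2 * R).toNNReal : ENNReal) ^ (1 : ℝ) * μH[1] (Set.Icc (-Real.pi) Real.pi) := by
        gcongr
        rintro _ ⟨x, -, rfl⟩
        exact hθ x
    _ = ENNReal.ofReal (4 * Real.pi * R) := by
        rw [hausdorffMeasure_real, Real.volume_Icc, ENNReal.rpow_one]
        change ENNReal.ofReal (2 * R) * _ = _
        rw [← ENNReal.ofReal_mul (by positivity)]
        congr 1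
        ring

/-! ### The estimate on one element and summation -/

/-- The bound for a single element, given the inverse estimate with constant `M`. -/
theorem boundary_bound_single {K : Set E2} {h ρ M : ℝ} {c : E2} (hρ : 0 < ρ) (hM : 0 < M)
    (p : MvPolynomial (Fin 2) ℝ)
    (H : ∀ x : E2, ‖x - c‖ ≤ h → (MvPolynomial.eval (fun j => x j) p) ^ 2 ≤
        M * (h ^ 2)⁻¹ *
          ∫ y in Metric.ball c (ρ * h), (MvPolynomial.eval (fun j => y j) p) ^ 2)
    (hK : IsCompact K) (hc : Convex ℝ K) (hh : 0 < h) (hd : Metric.diam K = h)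
    (hb : Metric.closedBall c (ρ * h) ⊆ K) :
    h * ∫ x in frontier K, (MvPolynomial.eval (fun j => x j) p) ^ 2 ∂(μH[1]) ≤
      (4 * Real.pi * M) * ∫ x in K, (MvPolynomial.eval (fun j => x j) p) ^ 2 := by
  have hρh : 0 < ρ * h := by positivity
  have hcK : c ∈ K := hb (Metric.mem_closedBall_self hρh.le)
  have hKR : ∀ x ∈ K, ‖x - c‖ ≤ h := fun x hx => by
    rw [← dist_eq_norm, ← hd]
    exact Metric.dist_le_diam_of_mem hK.isBounded hx hcK
  have hint : (interior K).Nonempty :=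
    ⟨c, interior_maximal (Metric.ball_subset_closedBall.trans hb) Metric.isOpen_ball
      (Metric.mem_ball_self hρh)⟩
  have hper := hausdorffMeasure_frontier_le_s4 hK.isClosed hc hint hh.le hKR
  have hperR : (μH[1] : Measure E2).real (frontier K) ≤ 4 * Real.pi * h :=
    ENNReal.toReal_le_of_le_ofReal (by positivity) hper
  set I := ∫ x in K, (MvPolynomial.eval (fun j => x j) p) ^ 2 with hI
  have hI0 : 0 ≤ I := integral_nonneg fun x => sq_nonneg _
  have hball : ∫ y in Metric.ball c (ρ * h), (MvPolynomial.eval (fun j => y j) p) ^ 2 ≤ I :=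
    setIntegral_mono_set
      (((continuous_evalE p).pow 2).continuousOn.integrableOn_compact hK)
      (Filter.Eventually.of_forall fun x => sq_nonneg _)
      (Metric.ball_subset_closedBall.trans hb).eventuallyLE
  have hbd : ∀ x ∈ frontier K,
      ‖(MvPolynomial.eval (fun j => x j) p) ^ 2‖ ≤ M * (h ^ 2)⁻¹ * I := fun x hx => by
    rw [Real.norm_of_nonneg (sq_nonneg _)]
    refine (H x (hKR x (hK.isClosed.frontier_subset hx))).trans ?_
    gcongr
  have h1 := norm_setIntegral_le_of_norm_le_const (μ := (μH[1] : Measure E2))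
    (hper.trans_lt ENNReal.ofReal_lt_top) hbd
  calc _ ≤ h * (M * (h ^ 2)⁻¹ * I * (4 * Real.pi * h)) := by
        refine mul_le_mul_of_nonneg_left ((le_abs_self _).trans (h1.trans ?_)) hh.le
        gcongr
    _ = _ := by field_simp

/-- Mesh-weighted boundary bound for piecewise polynomials: over a finite family of
shape-regular compact convex elements `K i ⊆ ℝ²` of diameter `hh i` containing balls
of radius `ρ·hh i`, with elementwise polynomials `q i` of degree at most `k`,
`Σ_i hh i · ∫_{∂K_i} q_i² dμH¹ ≤ C Σ_i ∫_{K_i} q_i²`, with `C` depending only on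
`k` and `ρ`. -/
theorem mesh_weighted_boundary_bound (k : ℕ) (ρ : ℝ) (hρ : ρ ∈ Set.Ioo (0 : ℝ) 1) :
    ∃ C : ℝ, 0 < C ∧
      ∀ (ι : Type) (s : Finset ι) (K : ι → Set (EuclideanSpace ℝ (Fin 2)))
        (hh : ι → ℝ) (q : ι → MvPolynomial (Fin 2) ℝ),
        (∀ i ∈ s, IsCompact (K i)) →
        (∀ i ∈ s, Convex ℝ (K i)) →
        (∀ i ∈ s, 0 < hh i) →
        (∀ i ∈ s, Metric.diam (K i) = hh i) →
        (∀ i ∈ s, ∃ c : EuclideanSpace ℝ (Fin 2),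
          Metric.closedBall c (ρ * hh i) ⊆ K i) →
        (∀ i ∈ s, (q i).totalDegree ≤ k) →
        (∑ i ∈ s, hh i *
            ∫ x in frontier (K i), (MvPolynomial.eval (fun j => x j) (q i)) ^ 2 ∂(μH[1])) ≤
          C * ∑ i ∈ s, ∫ x in K i, (MvPolynomial.eval (fun j => x j) (q i)) ^ 2 := by
  obtain ⟨M, hM, H⟩ := exists_sq_le_integral_ball_scaled k hρ.1
  refine ⟨4 * Real.pi * M, by positivity, ?_⟩
  intro ι s K hh q hK hc hpos hd hb hq
  rw [Finset.mul_sum]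
  refine Finset.sum_le_sum fun i hi => ?_
  obtain ⟨c, hcb⟩ := hb i hi
  exact boundary_bound_single hρ.1 hM (q i) (H (q i) (hq i hi) c (hh i) (hpos i hi))
    (hK i hi) (hc i hi) (hpos i hi) (hd i hi) hcb
end
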